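/- arXiv:2305.05376 — 2 statements merged into one kernel-verified Lean document; each statement's English description precedes it below -/
import Mathlib

section
/- Let (X, 𝒯) be a fuzzy topological space and let λ be a fuzzy set in X. Then λ is somewhat fuzzy open if and only if λ is somewhat fuzzy semiopen. -/
open unitInterval

/-- `Fact` instance making the unit interval `I = [0,1]` a complete lattice. -/
instance : Fact ((0:ℝ) ≤ 1) := ⟨zero_le_one⟩

namespace SomewhatFuzzy

variable {X Y : Type*}

/-- A fuzzy topology on `X` is a collection `T` of fuzzy sets (functions `X → [0,1]`,
ordered pointwise) containing the constant functions `0` and `1`, closed under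
pointwise minimum of two members, and closed under pointwise supremum of any
subfamily. -/
def IsFuzzyTopology (T : Set (X → I)) : Prop :=
  (fun _ => (0 : I)) ∈ T ∧ (fun _ => (1 : I)) ∈ T ∧
    (∀ μ ν, μ ∈ T → ν ∈ T → (fun x => μ x ⊓ ν x) ∈ T) ∧
    (∀ S : Set (X → I), S ⊆ T → (fun x => ⨆ μ ∈ S, μ x) ∈ T)

/-- The fuzzy interior of `l`: the pointwise supremum of all fuzzy open sets `≤ l`. -/
noncomputable def fInterior (T : Set (X → I)) (l : X → I) : X → I :=
  fun x => ⨆ μ ∈ {μ : X → I | μ ∈ T ∧ μ ≤ l}, μ x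

/-- A fuzzy set `μ` is fuzzy closed if `1 - μ` is fuzzy open. -/
def IsFuzzyClosed (T : Set (X → I)) (μ : X → I) : Prop :=
  (fun x => unitInterval.symm (μ x)) ∈ T

/-- The fuzzy closure of `l`: the pointwise infimum of all fuzzy closed sets `≥ l`. -/
noncomputable def fClosure (T : Set (X → I)) (l : X → I) : X → I :=
  fun x => ⨅ μ ∈ {μ : X → I | IsFuzzyClosed T μ ∧ l ≤ μ}, μ x

/-- A fuzzy set `l` is fuzzy semiopen if `l ≤ Cl(Int(l))`. -/
def IsFuzzySemiopen (T : Set (X → I)) (l : X → I) : Prop :=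
  l ≤ fClosure T (fInterior T l)

/-- The fuzzy semi-interior of `l`: the pointwise supremum of all fuzzy semiopen
sets `≤ l`. -/
noncomputable def fSemiInterior (T : Set (X → I)) (l : X → I) : X → I :=
  fun x => ⨆ μ ∈ {μ : X → I | IsFuzzySemiopen T μ ∧ μ ≤ l}, μ x

/-- A fuzzy set `μ` is fuzzy semiclosed if `1 - μ` is fuzzy semiopen. -/
def IsFuzzySemiclosed (T : Set (X → I)) (μ : X → I) : Prop :=
  IsFuzzySemiopen T (fun x => unitInterval.symm (μ x))

/-- The fuzzy semi-closure of `l`: the pointwise infimum of all fuzzy semiclosed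
sets `≥ l`. -/
noncomputable def fSemiClosure (T : Set (X → I)) (l : X → I) : X → I :=
  fun x => ⨅ μ ∈ {μ : X → I | IsFuzzySemiclosed T μ ∧ l ≤ μ}, μ x

/-- A fuzzy set `l` is somewhat fuzzy open if `l = 0` or `Int(l) ≠ 0`. -/
def SomewhatFuzzyOpen (T : Set (X → I)) (l : X → I) : Prop :=
  l = (fun _ => (0 : I)) ∨ fInterior T l ≠ (fun _ => (0 : I))

/-- A fuzzy set `l` is somewhat fuzzy semiopen if `l = 0` or `Int_s(l) ≠ 0`. -/
def SomewhatFuzzySemiopen (T : Set (X → I)) (l : X → I) : Prop :=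
  l = (fun _ => (0 : I)) ∨ fSemiInterior T l ≠ (fun _ => (0 : I))

/-- Preimage of a fuzzy set under a function: `f⁻¹(β) = β ∘ f`. -/
def fPreimage (f : X → Y) (b : Y → I) : X → I := fun x => b (f x)

/-- Image of a fuzzy set under a function:
`f(α)(y) = sup {α x : f x = y}` (supremum over the empty set being `0`). -/
noncomputable def fImage (f : X → Y) (a : X → I) : Y → I :=
  fun y => ⨆ x ∈ {x : X | f x = y}, a x

/-- `f` is fuzzy continuous if the preimage of every fuzzy open set is fuzzy open. -/
def FuzzyContinuous (T : Set (X → I)) (U : Set (Y → I)) (f : X → Y) : Prop :=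
  ∀ b ∈ U, fPreimage f b ∈ T

/-- `f` is fuzzy semicontinuous if the preimage of every fuzzy open set is fuzzy
semiopen. -/
def FuzzySemicontinuous (T : Set (X → I)) (U : Set (Y → I)) (f : X → Y) : Prop :=
  ∀ b ∈ U, IsFuzzySemiopen T (fPreimage f b)

/-- `f` is somewhat fuzzy continuous if the preimage of every fuzzy open set is
somewhat fuzzy open. -/
def SomewhatFuzzyContinuous (T : Set (X → I)) (U : Set (Y → I)) (f : X → Y) : Prop :=
  ∀ b ∈ U, SomewhatFuzzyOpen T (fPreimage f b)

/-- `f` is somewhat fuzzy semicontinuous if the preimage of every fuzzy open set is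
somewhat fuzzy semiopen. -/
def SomewhatFuzzySemicontinuous (T : Set (X → I)) (U : Set (Y → I)) (f : X → Y) : Prop :=
  ∀ b ∈ U, SomewhatFuzzySemiopen T (fPreimage f b)

/-- `f` is a fuzzy open function if the image of every fuzzy open set is fuzzy open. -/
def FuzzyOpenMap (T : Set (X → I)) (U : Set (Y → I)) (f : X → Y) : Prop :=
  ∀ a ∈ T, fImage f a ∈ U

/-- `f` is a fuzzy semiopen function if the image of every fuzzy open set is fuzzy
semiopen. -/
def FuzzySemiopenMap (T : Set (X → I)) (U : Set (Y → I)) (f : X → Y) : Prop :=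
  ∀ a ∈ T, IsFuzzySemiopen U (fImage f a)

/-- `f` is a somewhat fuzzy open function if the image of every fuzzy open set is
somewhat fuzzy open. -/
def SomewhatFuzzyOpenMap (T : Set (X → I)) (U : Set (Y → I)) (f : X → Y) : Prop :=
  ∀ a ∈ T, SomewhatFuzzyOpen U (fImage f a)

/-- `f` is a somewhat fuzzy semiopen function if the image of every fuzzy open set is
somewhat fuzzy semiopen. -/
def SomewhatFuzzySemiopenMap (T : Set (X → I)) (U : Set (Y → I)) (f : X → Y) : Prop :=
  ∀ a ∈ T, SomewhatFuzzySemiopen U (fImage f a)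

/-!
An open set is semiopen, so `Int l ≤ Int_s l`. Conversely, if `Int l = 0`, then every semiopen
`μ ≤ l` satisfies `μ ≤ Cl (Int μ) ≤ Cl (Int l) = Cl 0 = 0`. Hence the two interiors vanish
simultaneously.
-/

variable {T : Set (X → I)} {l μ : X → I}

theorem isLUB_fInterior (T : Set (X → I)) (l : X → I) :
    IsLUB {μ | μ ∈ T ∧ μ ≤ l} (fInterior T l) :=
  isLUB_pi.2 fun _ => isLUB_biSup

theorem isLUB_fSemiInterior (T : Set (X → I)) (l : X → I) :
    IsLUB {μ | IsFuzzySemiopen T μ ∧ μ ≤ l} (fSemiInterior T l) :=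
  isLUB_pi.2 fun _ => isLUB_biSup

theorem isGLB_fClosure (T : Set (X → I)) (l : X → I) :
    IsGLB {μ | IsFuzzyClosed T μ ∧ l ≤ μ} (fClosure T l) :=
  isGLB_pi.2 fun _ => isGLB_biInf

theorem fInterior_mono (T : Set (X → I)) : Monotone (fInterior T) := fun l m hlm =>
  (isLUB_fInterior T l).mono (isLUB_fInterior T m) fun _ hμ => ⟨hμ.1, hμ.2.trans hlm⟩

theorem fClosure_mono (T : Set (X → I)) : Monotone (fClosure T) := fun l m hlm =>
  (isGLB_fClosure T m).mono (isGLB_fClosure T l) fun _ hμ => ⟨hμ.1, hlm.trans hμ.2⟩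

theorem le_fClosure (T : Set (X → I)) (l : X → I) : l ≤ fClosure T l :=
  (isGLB_fClosure T l).2 fun _ hμ => hμ.2

theorem le_fInterior_of_mem (hl : l ∈ T) : l ≤ fInterior T l :=
  (isLUB_fInterior T l).1 ⟨hl, le_rfl⟩

theorem isFuzzySemiopen_of_mem (hl : l ∈ T) : IsFuzzySemiopen T l :=
  (le_fInterior_of_mem hl).trans (le_fClosure T _)

theorem fInterior_le_fSemiInterior (T : Set (X → I)) (l : X → I) :
    fInterior T l ≤ fSemiInterior T l :=
  (isLUB_fInterior T l).mono (isLUB_fSemiInterior T l) fun _ hμ =>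
    ⟨isFuzzySemiopen_of_mem hμ.1, hμ.2⟩

theorem IsFuzzySemiopen.le_fClosure_fInterior (hμ : IsFuzzySemiopen T μ) (hμl : μ ≤ l) :
    μ ≤ fClosure T (fInterior T l) :=
  hμ.trans (fClosure_mono T (fInterior_mono T hμl))

theorem fSemiInterior_le_fClosure_fInterior (T : Set (X → I)) (l : X → I) :
    fSemiInterior T l ≤ fClosure T (fInterior T l) :=
  (isLUB_fSemiInterior T l).2 fun _ hμ => hμ.1.le_fClosure_fInterior hμ.2

theorem eq_zero_of_le_zero (h : l ≤ 0) : l = 0 :=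
  h.antisymm fun _ => nonneg'

theorem isFuzzyClosed_zero_iff : IsFuzzyClosed T 0 ↔ (fun _ => 1) ∈ T := by
  simp only [IsFuzzyClosed, Pi.zero_apply, symm_zero]

theorem IsFuzzyClosed.fClosure_eq (hl : IsFuzzyClosed T l) : fClosure T l = l :=
  ((isGLB_fClosure T l).1 ⟨hl, le_rfl⟩).antisymm (le_fClosure T l)

theorem fSemiInterior_eq_zero_iff (hT : (fun _ => 1) ∈ T) :
    fSemiInterior T l = 0 ↔ fInterior T l = 0 := by
  constructor
  · intro h
    exact eq_zero_of_le_zero ((fInterior_le_fSemiInterior T l).trans_eq h)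
  · intro h
    apply eq_zero_of_le_zero
    calc
      fSemiInterior T l ≤ fClosure T (fInterior T l) := fSemiInterior_le_fClosure_fInterior T l
      _ = fClosure T 0 := by rw [h]
      _ = 0 := (isFuzzyClosed_zero_iff.2 hT).fClosure_eq

theorem somewhatFuzzyOpen_iff_somewhatFuzzySemiopen_general
    (hT : (fun _ => 1) ∈ T) (l : X → I) :
    SomewhatFuzzyOpen T l ↔ SomewhatFuzzySemiopen T l :=
  or_congr_right (fSemiInterior_eq_zero_iff hT).symm.not

/-- Lemma 2.3: a fuzzy set is somewhat fuzzy open iff it is somewhat fuzzy semiopen. -/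
theorem somewhatFuzzyOpen_iff_somewhatFuzzySemiopen
    {X : Type*} (T : Set (X → I)) (hT : IsFuzzyTopology T) (l : X → I) :
    SomewhatFuzzyOpen T l ↔ SomewhatFuzzySemiopen T l :=
  somewhatFuzzyOpen_iff_somewhatFuzzySemiopen_general hT.2.1 l

end SomewhatFuzzy
end

section
/- Let X = [0,1] and define fuzzy sets μ, λ, σ, β on X by: μ(x) = 0 for 0 ≤ x ≤ 1/2 and μ(x) = 2x − 1 for 1/2 ≤ x ≤ 1; λ(x) = 1 for 0 ≤ x ≤ 1/4, λ(x) = −4x + 2 for 1/4 ≤ x ≤ 1/2, and λ(x) = 0 for 1/2 ≤ x ≤ 1; σ(x) = 1 for 0 ≤ x ≤ 1/4, σ(x) = −4x + 2 for 1/4 ≤ x ≤ 1/2, and σ(x) = 2x − 1 for 1/2 ≤ x ≤ 1; β(x) = 2x for 0 ≤ x ≤ 1/2 and β(x) = 1 for 1/2 ≤ x ≤ 1. Then 𝒯 = {0, μ, λ, σ, 1} is a fuzzy topology on X, and with respect to 𝒯 the fuzzy set β is somewhat fuzzy open but not fuzzy semiopen. -/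
open unitInterval

namespace SomewhatFuzzy

variable {X Y : Type*}

/-- `μ(x) = 0` for `x ≤ 1/2`, and `μ(x) = 2x - 1` for `1/2 ≤ x ≤ 1`. -/
noncomputable def exMu : I → I := fun x =>
  if (x : ℝ) ≤ 1/2 then 0 else Set.projIcc 0 1 zero_le_one (2 * (x : ℝ) - 1)

/-- `λ(x) = 1` for `x ≤ 1/4`, `λ(x) = -4x + 2` for `1/4 ≤ x ≤ 1/2`, and `λ(x) = 0`
for `1/2 ≤ x ≤ 1`. -/
noncomputable def exLam : I → I := fun x =>
  if (x : ℝ) ≤ 1/4 then 1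
  else if (x : ℝ) ≤ 1/2 then Set.projIcc 0 1 zero_le_one (-4 * (x : ℝ) + 2)
  else 0

/-- `σ(x) = 1` for `x ≤ 1/4`, `σ(x) = -4x + 2` for `1/4 ≤ x ≤ 1/2`, and
`σ(x) = 2x - 1` for `1/2 ≤ x ≤ 1`. -/
noncomputable def exSig : I → I := fun x =>
  if (x : ℝ) ≤ 1/4 then 1
  else if (x : ℝ) ≤ 1/2 then Set.projIcc 0 1 zero_le_one (-4 * (x : ℝ) + 2)
  else Set.projIcc 0 1 zero_le_one (2 * (x : ℝ) - 1)

/-- The fuzzy topology `{0, μ, λ, σ, 1}` on `[0,1]` of Example 2.4. -/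
noncomputable def exT : Set (I → I) :=
  {fun _ => (0 : I), exMu, exLam, exSig, fun _ => (1 : I)}

/-- `β(x) = 2x` for `0 ≤ x ≤ 1/2`, and `β(x) = 1` for `1/2 ≤ x ≤ 1`. -/
noncomputable def exBeta : I → I := fun x =>
  if (x : ℝ) ≤ 1/2 then Set.projIcc 0 1 zero_le_one (2 * (x : ℝ)) else 1

/-!
The fuzzy sets `μ` and `λ` have disjoint supports and supremum `σ`, so `{0, μ, λ, σ, 1}` is a
finite bounded sublattice of the fuzzy sets on `[0,1]`, hence a fuzzy topology. As `0 ≠ μ ≤ β`, the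
interior of `β` is nonzero. Since `λ(0) = 1 > 0 = β(0)`, no open set above `λ` lies below `β`, so
the interior of `β` is at most `μ`, which is below the closed set `1 - λ`. If `β` were semiopen, it
would lie below `1 - λ` too, but `β(1/4) = 1/2` while `1 - λ(1/4) = 0`.
-/

section Lattice

variable {α : Type*}

/-- The elements `⊥, a, b, a ⊔ b, ⊤` of a bounded join-semilattice. They form a sublattice when `a`
and `b` are disjoint; for fuzzy sets this is the family `{0, μ, λ, σ, 1}` with `σ = μ ⊔ λ`. -/
def pairSpan [SemilatticeSup α] [BoundedOrder α] (a b : α) : Set α :=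
  {⊥, a, b, a ⊔ b, ⊤}

theorem finite_pairSpan [SemilatticeSup α] [BoundedOrder α] (a b : α) : (pairSpan a b).Finite :=
  Set.toFinite {⊥, a, b, a ⊔ b, ⊤}

theorem supClosed_pairSpan [SemilatticeSup α] [BoundedOrder α] (a b : α) :
    SupClosed (pairSpan a b) := by
  rintro c (rfl | rfl | rfl | rfl | rfl) d (rfl | rfl | rfl | rfl | rfl) <;>
    simp [pairSpan, sup_comm]

theorem infClosed_pairSpan [Lattice α] [BoundedOrder α] {a b : α} (hab : Disjoint a b) :
    InfClosed (pairSpan a b) := by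
  rintro c (rfl | rfl | rfl | rfl | rfl) d (rfl | rfl | rfl | rfl | rfl) <;>
    simp [pairSpan, hab.eq_bot, hab.symm.eq_bot]

theorem le_left_of_mem_pairSpan [SemilatticeSup α] [BoundedOrder α] {a b c : α}
    (hc : c ∈ pairSpan a b) (hbc : ¬ b ≤ c) : c ≤ a := by
  rcases hc with rfl | rfl | rfl | rfl | rfl
  · exact bot_le
  · exact le_rfl
  · exact absurd le_rfl hbc
  · exact absurd le_sup_right hbc
  · exact absurd le_top hbc

end Lattice

section FuzzyTopology

variable {T : Set (X → I)} {l μ ν : X → I}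

theorem isFuzzyTopology_of_finite (hT : T.Finite) (hbot : ⊥ ∈ T) (htop : ⊤ ∈ T)
    (hinf : InfClosed T) (hsup : SupClosed T) : IsFuzzyTopology T := by
  refine ⟨hbot, htop, fun μ ν hμ hν => hinf hμ hν, fun S hS => ?_⟩
  have hS_sup : (fun x => ⨆ μ ∈ S, μ x) = sSup S := by
    ext1 x
    simp only [sSup_eq_iSup, iSup_apply]
  rw [hS_sup]
  exact hsup.sSup_mem (hT.subset hS) hbot hS

theorem isFuzzyTopology_pairSpan (hμν : Disjoint μ ν) : IsFuzzyTopology (pairSpan μ ν) :=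
  isFuzzyTopology_of_finite (finite_pairSpan μ ν) (by simp [pairSpan]) (by simp [pairSpan])
    (infClosed_pairSpan hμν) (supClosed_pairSpan μ ν)

theorem le_fInterior (hμ : μ ∈ T) (hμl : μ ≤ l) : μ ≤ fInterior T l := fun x =>
  le_iSup₂ (f := fun (ν : X → I) (_ : ν ∈ {ν | ν ∈ T ∧ ν ≤ l}) => ν x) μ ⟨hμ, hμl⟩

theorem fInterior_le (h : ∀ μ ∈ T, μ ≤ l → μ ≤ ν) : fInterior T l ≤ ν := fun x =>
  iSup₂_le fun μ hμ => h μ hμ.1 hμ.2 x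

theorem fClosure_le (hμ : IsFuzzyClosed T μ) (hlμ : l ≤ μ) : fClosure T l ≤ μ := fun x =>
  iInf₂_le (f := fun (ν : X → I) (_ : ν ∈ {ν | IsFuzzyClosed T ν ∧ l ≤ ν}) => ν x) μ ⟨hμ, hlμ⟩

theorem somewhatFuzzyOpen_of_le (hμ : μ ∈ T) (hμ_ne : μ ≠ ⊥) (hμl : μ ≤ l) :
    SomewhatFuzzyOpen T l :=
  Or.inr (ne_bot_of_le_ne_bot hμ_ne (le_fInterior hμ hμl))

theorem IsFuzzySemiopen.le_of_fInterior_le (hl : IsFuzzySemiopen T l) (hμ : IsFuzzyClosed T μ)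
    (h : fInterior T l ≤ μ) : l ≤ μ :=
  le_trans hl (fClosure_le hμ h)

theorem isFuzzyClosed_symm_comp (hμ : μ ∈ T) : IsFuzzyClosed T (unitInterval.symm ∘ μ) := by
  simpa only [IsFuzzyClosed, Function.comp_apply, unitInterval.symm_symm] using hμ

theorem le_symm_comp_of_disjoint (hμν : Disjoint μ ν) : μ ≤ unitInterval.symm ∘ ν := by
  intro x
  rcases min_eq_bot.mp (congrFun hμν.eq_bot x) with hμx | hνx
  · exact hμx.trans_le bot_le
  · have hsymm : unitInterval.symm (ν x) = 1 :=
      (congrArg unitInterval.symm hνx).trans unitInterval.symm_zero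
    exact unitInterval.le_one'.trans_eq hsymm.symm

theorem not_isFuzzySemiopen_pairSpan (hμν : Disjoint μ ν) (hνl : ¬ ν ≤ l)
    (hl : ¬ l ≤ unitInterval.symm ∘ ν) : ¬ IsFuzzySemiopen (pairSpan μ ν) l := by
  intro hsemi
  have hint : fInterior (pairSpan μ ν) l ≤ μ :=
    fInterior_le fun κ hκ hκl => le_left_of_mem_pairSpan hκ fun hνκ => hνl (hνκ.trans hκl)
  have hclosed : IsFuzzyClosed (pairSpan μ ν) (unitInterval.symm ∘ ν) :=
    isFuzzyClosed_symm_comp (by simp [pairSpan])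
  exact hl (hsemi.le_of_fInterior_le hclosed (hint.trans (le_symm_comp_of_disjoint hμν)))

end FuzzyTopology

section Example

theorem exMu_eq_bot_of_le_half {x : I} (hx : (x : ℝ) ≤ 1 / 2) : exMu x = ⊥ :=
  if_pos hx

theorem exLam_eq_bot_of_half_lt {x : I} (hx : 1 / 2 < (x : ℝ)) : exLam x = ⊥ := by
  rw [exLam, if_neg (by linarith), if_neg hx.not_ge]
  rfl

theorem exSig_of_le_half {x : I} (hx : (x : ℝ) ≤ 1 / 2) : exSig x = exLam x := by
  simp only [exSig, exLam, if_pos hx]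

theorem exSig_of_half_lt {x : I} (hx : 1 / 2 < (x : ℝ)) : exSig x = exMu x := by
  rw [exSig, exMu, if_neg (by linarith), if_neg hx.not_ge, if_neg hx.not_ge]

theorem disjoint_exMu_exLam : Disjoint exMu exLam := by
  rw [disjoint_iff]
  ext1 x
  rw [Pi.inf_apply, Pi.bot_apply]
  rcases le_or_gt (x : ℝ) (1 / 2) with hx | hx
  · rw [exMu_eq_bot_of_le_half hx, bot_inf_eq]
  · rw [exLam_eq_bot_of_half_lt hx, inf_bot_eq]

theorem exMu_sup_exLam : exMu ⊔ exLam = exSig := by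
  ext1 x
  rw [Pi.sup_apply]
  rcases le_or_gt (x : ℝ) (1 / 2) with hx | hx
  · rw [exMu_eq_bot_of_le_half hx, exSig_of_le_half hx, bot_sup_eq]
  · rw [exLam_eq_bot_of_half_lt hx, exSig_of_half_lt hx, sup_bot_eq]

theorem exT_eq_pairSpan : exT = pairSpan exMu exLam := by
  rw [pairSpan, exMu_sup_exLam]
  rfl

theorem exMu_one : exMu 1 = 1 := by
  rw [exMu, if_neg (by norm_num)]
  exact Set.projIcc_of_right_le _ (by norm_num)

theorem exMu_ne_bot : exMu ≠ ⊥ := fun h =>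
  one_ne_zero (exMu_one.symm.trans (congrFun h 1))

theorem exMu_le_exBeta : exMu ≤ exBeta := by
  intro x
  rcases le_or_gt (x : ℝ) (1 / 2) with hx | hx
  · exact (exMu_eq_bot_of_le_half hx).trans_le bot_le
  · exact unitInterval.le_one'.trans_eq (if_neg hx.not_ge).symm

theorem exLam_of_le_quarter {x : I} (hx : (x : ℝ) ≤ 1 / 4) : exLam x = 1 :=
  if_pos hx

theorem coe_exBeta_of_le_half {x : I} (hx : (x : ℝ) ≤ 1 / 2) : (exBeta x : ℝ) = 2 * x := by
  rw [exBeta, if_pos hx, Set.projIcc_of_mem _ ⟨by linarith [x.2.1], by linarith⟩]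

theorem not_exLam_le_exBeta : ¬ exLam ≤ exBeta := by
  intro h
  have h0 : (exLam 0 : ℝ) ≤ exBeta 0 := h 0
  rw [exLam_of_le_quarter (by norm_num), coe_exBeta_of_le_half (by norm_num)] at h0
  norm_num at h0

theorem not_exBeta_le_symm_comp_exLam : ¬ exBeta ≤ unitInterval.symm ∘ exLam := by
  intro h
  let q : I := ⟨1 / 4, by norm_num, by norm_num⟩
  have hq : (exBeta q : ℝ) ≤ unitInterval.symm (exLam q) := h q
  rw [exLam_of_le_quarter le_rfl, coe_exBeta_of_le_half (by norm_num [q])] at hq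
  norm_num [q] at hq

end Example

/-- Example 2.4: `{0, μ, λ, σ, 1}` is a fuzzy topology on `[0,1]`, and `β` is
somewhat fuzzy open but not fuzzy semiopen with respect to it. -/
theorem exBeta_somewhatFuzzyOpen_not_semiopen :
    IsFuzzyTopology exT ∧ SomewhatFuzzyOpen exT exBeta ∧ ¬ IsFuzzySemiopen exT exBeta := by
  rw [exT_eq_pairSpan]
  have hmu_open : exMu ∈ pairSpan exMu exLam := by simp [pairSpan]
  exact ⟨isFuzzyTopology_pairSpan disjoint_exMu_exLam,
    somewhatFuzzyOpen_of_le hmu_open exMu_ne_bot exMu_le_exBeta,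
    not_isFuzzySemiopen_pairSpan disjoint_exMu_exLam not_exLam_le_exBeta
      not_exBeta_le_symm_comp_exLam⟩

end SomewhatFuzzy
end
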